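/- Let β > 1, let {f_n}_{n≥1} be a sequence of maps 𝕋 → 𝕋 with a uniform Lipschitz constant, let ψ : ℕ → (0,1], and set τ := liminf_{n→∞} (−log ψ(n))/n. Then the Hausdorff dimension of the set {x ∈ 𝕋 : |T_β^n(x) − f_n(x)| < ψ(n) for infinitely many n ∈ ℕ} equals (log β)/(log β + τ), interpreted as 0 when τ = ∞. -/

import Mathlib

open Filter MeasureTheory
open scoped ENNReal

/-- The β-transformation `x ↦ βx - ⌊βx⌋` on `[0,1)`. -/
noncomputable def betaT (β : ℝ) : ℝ → ℝ := fun x => Int.fract (β * x)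

/-- The usual metric on the torus `𝕋 = ℝ/ℤ`: distance from `a - b` to the nearest integer. -/
noncomputable def tdist (a b : ℝ) : ℝ := ⨅ k : ℤ, |a - b - (k : ℝ)|

/-!
Upper bound. On a piece of a cylinder of order `n` where `T_β^n` varies by at most `1/2`, the
function `T_β^n - f_n` expands distances by a factor of at least `βⁿ/2`, so it is within `ψ(n)` of
`0` only on a set of diameter at most `4 ψ(n) β⁻ⁿ`. There are `O(βⁿ)` cylinders of order `n`, and
the `s`-dimensional sums of these covers converge for `s > log β / (log β + τ)`.

Lower bound. Left endpoints of cylinders that are new at order `k` are `β⁻ᵏ`-separated, while every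
interval of length `j β⁻ⁿ` contains about `j` endpoints of order `n`. Hence, once `j` exceeds a
multiple of `n`, some of these endpoints are new at an order close to `n`; immediately to the left
of such a point lies a full cylinder. So full cylinders occur in every interval of length
`O(n β⁻ⁿ)`. On a full cylinder of order `n - 1`, the image under `T_β^n` wraps more than once around
the circle and therefore meets the graph of `f_n`, which produces an interval of length comparable
to `ψ(n) β⁻ⁿ` inside the `n`-th target set. A Cantor set is built from such intervals along a
sufficiently sparse sequence of orders `n` with `ψ(n)` close to `exp (-τ n)`; coding it by `[0, 1)`
gives an expanding Hölder estimate, which bounds its dimension from below.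
-/

open Set
open scoped NNReal Topology

/-! ### The circle -/

lemma tdist_eq_dist (a b : ℝ) : tdist a b = dist (a : UnitAddCircle) (b : UnitAddCircle) := by
  rw [dist_eq_norm, ← AddCircle.coe_sub, UnitAddCircle.norm_eq]
  refine le_antisymm (ciInf_le ⟨0, ?_⟩ _) (le_ciInf fun k => round_le _ k)
  rintro _ ⟨k, rfl⟩
  exact abs_nonneg _

lemma dist_unitAddCircle_coe_le (a b : ℝ) :
    dist (a : UnitAddCircle) (b : UnitAddCircle) ≤ |a - b| := by
  rw [dist_eq_norm, ← AddCircle.coe_sub, ← Real.norm_eq_abs]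
  exact QuotientAddGroup.norm_mk_le_norm

lemma dist_unitAddCircle_coe_eq {a b : ℝ} (h : |a - b| ≤ 1 / 2) :
    dist (a : UnitAddCircle) (b : UnitAddCircle) = |a - b| := by
  rw [dist_eq_norm, ← AddCircle.coe_sub]
  exact (AddCircle.norm_coe_eq_abs_iff (p := (1 : ℝ)) one_ne_zero).2 (by simpa using h)

/-! ### Hausdorff dimension -/

lemma mul_dimH_le_dimH_image {X Y : Type*} [EMetricSpace X] [EMetricSpace Y] {f : X → Y}
    {A : Set X} {C r : ℝ≥0} (hr : 0 < r)
    (hf : ∀ x ∈ A, ∀ y ∈ A, edist x y ≤ C * edist (f x) (f y) ^ (r : ℝ)) :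
    r * dimH A ≤ dimH (f '' A) := by
  rcases A.eq_empty_or_nonempty with rfl | ⟨a, -⟩
  · simp
  have : Nonempty X := ⟨a⟩
  have hinj : InjOn f A := fun x hx y hy hxy => by
    simpa [hxy, ENNReal.zero_rpow_of_pos (NNReal.coe_pos.2 hr)] using hf x hx y hy
  have hinv : LeftInvOn (Function.invFunOn f A) f A := hinj.leftInvOn_invFunOn
  have hholder : HolderOnWith C r (Function.invFunOn f A) (f '' A) := by
    rintro _ ⟨x, hx, rfl⟩ _ ⟨y, hy, rfl⟩
    rw [hinv hx, hinv hy]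
    exact hf x hx y hy
  have hdim := hholder.dimH_image_le hr
  rwa [hinv.image_image, ENNReal.le_div_iff_mul_le (by simp [hr.ne']) (by simp),
    mul_comm] at hdim

lemma tendsto_iSup_add_atTop_zero {d : ℕ → ℝ≥0∞} (hd : Tendsto d atTop (𝓝 0)) :
    Tendsto (fun N => ⨆ n, d (n + N)) atTop (𝓝 0) := by
  have hanti : Antitone fun N => ⨆ n, d (n + N) := fun M N hMN =>
    iSup_le fun n => le_iSup_of_le (n + (N - M)) (by rw [add_assoc, Nat.sub_add_cancel hMN])
  have hlim := tendsto_atTop_iInf hanti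
  rwa [← limsup_eq_iInf_iSup_of_nat', hd.limsup_eq] at hlim

lemma tsum_ediam_rpow_le {X : Type*} [PseudoEMetricSpace X] {ι : ℕ → Type*} [∀ n, Finite (ι n)]
    {U : ∀ n, ι n → Set X} {d : ℕ → ℝ≥0} {s : ℝ} (hs : 0 ≤ s)
    (hU : ∀ n i, Metric.ediam (U n i) ≤ d n) :
    ∑' p : Σ n, ι n, Metric.ediam (U p.1 p.2) ^ s ≤
      ∑' n, ((Nat.card (ι n) * d n ^ s : ℝ≥0) : ℝ≥0∞) :=
  calc ∑' p : Σ n, ι n, Metric.ediam (U p.1 p.2) ^ s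
      ≤ ∑' p : Σ n, ι n, (d p.1 : ℝ≥0∞) ^ s := by
        gcongr with p
        exact hU p.1 p.2
    _ = ∑' n, ((Nat.card (ι n) * d n ^ s : ℝ≥0) : ℝ≥0∞) := by
        rw [ENNReal.tsum_sigma']
        simp [ENNReal.coe_rpow_of_nonneg _ hs, ENat.card_eq_coe_natCard]

lemma dimH_limsup_le_of_cover {X : Type*} [EMetricSpace X] {E : ℕ → Set X} {ι : ℕ → Type*}
    [∀ n, Finite (ι n)] {U : ∀ n, ι n → Set X} {d : ℕ → ℝ≥0} {s : ℝ≥0}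
    (hcover : ∀ᶠ n in atTop, E n ⊆ ⋃ i, U n i)
    (hdiam : ∀ᶠ n in atTop, ∀ i, Metric.ediam (U n i) ≤ d n) (hd : Tendsto d atTop (𝓝 0))
    (hsum : Summable fun n => Nat.card (ι n) * d n ^ (s : ℝ)) :
    dimH (limsup E atTop) ≤ s := by
  borelize X
  obtain ⟨N₀, hN₀⟩ := eventually_atTop.1 (hcover.and hdiam)
  have hlate : ∀ᶠ N in atTop, ∀ n, E (n + N) ⊆ ⋃ i, U (n + N) i ∧
      ∀ i, Metric.ediam (U (n + N) i) ≤ d (n + N) :=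
    (eventually_ge_atTop N₀).mono fun N hN n => hN₀ _ (hN.trans (Nat.le_add_left _ _))
  have hbound : ∀ᶠ N in atTop, ∑' p : Σ n, ι (n + N), Metric.ediam (U (p.1 + N) p.2) ^ (s : ℝ) ≤
      ∑' n, ((Nat.card (ι n) * d n ^ (s : ℝ) : ℝ≥0) : ℝ≥0∞) :=
    hlate.mono fun N hN => (tsum_ediam_rpow_le s.2 fun n => (hN n).2).trans
      (ENNReal.tsum_comp_le_tsum_of_injective (add_left_injective N)
        fun n => ((Nat.card (ι n) * d n ^ (s : ℝ) : ℝ≥0) : ℝ≥0∞))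
  have hmeas := Measure.hausdorffMeasure_le_liminf_tsum (ι := fun N => Σ n, ι (n + N)) s
    (limsup E atTop) (fun N => ⨆ n, (d (n + N) : ℝ≥0∞))
    (tendsto_iSup_add_atTop_zero (ENNReal.tendsto_coe.2 hd)) (fun N p => U (p.1 + N) p.2)
    (hlate.mono fun N hN p => ((hN p.1).2 p.2).trans (le_iSup (fun n => (d (n + N) : ℝ≥0∞)) p.1))
    (hlate.mono fun N hN x hx => by
      obtain ⟨n, hNn, hxn⟩ := frequently_atTop.1 (mem_limsup_iff_frequently_mem.1 hx) N
      obtain ⟨k, rfl⟩ := Nat.exists_eq_add_of_le' hNn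
      obtain ⟨i, hi⟩ := mem_iUnion.1 ((hN k).1 hxn)
      exact mem_iUnion.2 ⟨⟨k, i⟩, hi⟩)
  refine dimH_le_of_hausdorffMeasure_ne_top (ne_top_of_le_ne_top
    (ENNReal.tsum_coe_ne_top_iff_summable.2 hsum) (hmeas.trans ?_))
  exact (liminf_le_liminf hbound).trans_eq (liminf_const _)

/-! ### Cantor constructions -/

/-- `A` is ubiquitous from scale `L` down to scale `r`: every interval of length `L` inside `[0, 1]`
contains an interval of length `r` on which membership in `A` holds. -/
def IntervalUbiquitous (A : Set ℝ) (L r : ℝ) : Prop :=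
  ∀ v, 0 ≤ v → v + L ≤ 1 → ∃ x, v ≤ x ∧ x + r ≤ v + L ∧ Icc x (x + r) ⊆ A

/-- The scales of a Cantor construction in `⋂ i, A i`: an interval of generation `i` has length
`len i` and is cut into cells of length `cell i`, every other of which receives an interval of
generation `i + 1` inside `A i`. -/
structure IntervalScheme (A : ℕ → Set ℝ) where
  len : ℕ → ℝ
  cell : ℕ → ℝ
  len_zero : len 0 = 1
  len_pos : ∀ i, 0 < len i
  cell_pos : ∀ i, 0 < cell i
  four_mul_cell_le : ∀ i, 4 * cell i ≤ len i
  ubiquitous : ∀ i, IntervalUbiquitous (A i) (cell i) (len (i + 1))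

namespace IntervalScheme

variable {A : ℕ → Set ℝ} (S : IntervalScheme A)

/-- The number of children of an interval of generation `i`. -/
noncomputable def branch (i : ℕ) : ℕ := ⌊S.len i / (2 * S.cell i)⌋₊

/-- The number of intervals of generation `i`. -/
noncomputable def nodes (i : ℕ) : ℕ := ∏ j ∈ Finset.range i, S.branch j

/-- The left endpoint of the interval placed in the cell of generation `i` starting at `v`. -/
noncomputable def pick (i : ℕ) (v : ℝ) : ℝ :=
  Classical.epsilon fun x =>
    v ≤ x ∧ x + S.len (i + 1) ≤ v + S.cell i ∧ Icc x (x + S.len (i + 1)) ⊆ A i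

/-- The left endpoint of the `k`-th interval of generation `i`, the children of the `k`-th interval
being numbered from `k * branch i`. -/
noncomputable def left : ℕ → ℕ → ℝ
  | 0, _ => 0
  | i + 1, k => S.pick i (left i (k / S.branch i) + 2 * ↑(k % S.branch i) * S.cell i)

/-- The `k`-th interval of generation `i`. -/
def interval (i k : ℕ) : Set ℝ := Icc (S.left i k) (S.left i k + S.len i)

/-- The left endpoint of the cell that contains the `k`-th interval of generation `i + 1`. -/
noncomputable def slot (i k : ℕ) : ℝ :=
  S.left i (k / S.branch i) + 2 * ↑(k % S.branch i) * S.cell i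

/-- The index of the interval of generation `i` on the branch coded by `t`. -/
noncomputable def address (i : ℕ) (t : ℝ) : ℕ := ⌊S.nodes i * t⌋₊

/-- The point of the Cantor set coded by `t`. -/
noncomputable def point (t : ℝ) : ℝ := ⨆ i, S.left i (S.address i t)

lemma two_le_branch (i : ℕ) : 2 ≤ S.branch i := by
  have hcell := S.cell_pos i
  rw [branch, Nat.le_floor_iff' two_ne_zero, le_div_iff₀ (by positivity)]
  push_cast
  linarith [S.four_mul_cell_le i]

lemma branch_mul_le (i : ℕ) : S.branch i * (2 * S.cell i) ≤ S.len i := by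
  have hcell := S.cell_pos i
  have hlen := S.len_pos i
  rw [← le_div_iff₀ (by positivity)]
  exact Nat.floor_le (by positivity)

lemma len_le_branch_mul (i : ℕ) : S.len i ≤ S.branch i * (4 * S.cell i) := by
  have hcell := S.cell_pos i
  have hlt := (div_lt_iff₀ (by positivity)).1 (Nat.lt_floor_add_one (S.len i / (2 * S.cell i)))
  have hbranch : (2 : ℝ) ≤ S.branch i := mod_cast S.two_le_branch i
  change S.len i < (S.branch i + 1) * (2 * S.cell i) at hlt
  nlinarith

lemma left_le_slot (i k : ℕ) : S.left i (k / S.branch i) ≤ S.slot i k := by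
  have hcell := S.cell_pos i
  exact le_add_of_nonneg_right (by positivity)

lemma slot_add_cell_le (i k : ℕ) :
    S.slot i k + S.cell i ≤ S.left i (k / S.branch i) + S.len i := by
  have hdigit : ((k % S.branch i : ℕ) : ℝ) + 1 ≤ S.branch i :=
    mod_cast Nat.mod_lt k (two_pos.trans_le (S.two_le_branch i))
  have hcell := S.cell_pos i
  rw [slot]
  nlinarith [S.branch_mul_le i]

lemma pick_spec {i : ℕ} {v : ℝ} (h0 : 0 ≤ v) (h1 : v + S.cell i ≤ 1) :
    v ≤ S.pick i v ∧ S.pick i v + S.len (i + 1) ≤ v + S.cell i ∧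
      Icc (S.pick i v) (S.pick i v + S.len (i + 1)) ⊆ A i :=
  Classical.epsilon_spec (S.ubiquitous i v h0 h1)

lemma left_nonneg_and_add_len_le (i k : ℕ) : 0 ≤ S.left i k ∧ S.left i k + S.len i ≤ 1 := by
  induction i generalizing k with
  | zero => simp [left, S.len_zero]
  | succ i ih =>
    obtain ⟨h0, h1⟩ := ih (k / S.branch i)
    have hslot0 : 0 ≤ S.slot i k := h0.trans (S.left_le_slot i k)
    have hslot1 : S.slot i k + S.cell i ≤ 1 := (S.slot_add_cell_le i k).trans h1
    obtain ⟨hpick0, hpick1, -⟩ := S.pick_spec hslot0 hslot1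
    exact ⟨hslot0.trans hpick0, hpick1.trans hslot1⟩

lemma slot_nonneg (i k : ℕ) : 0 ≤ S.slot i k :=
  (S.left_nonneg_and_add_len_le i _).1.trans (S.left_le_slot i k)

lemma slot_add_cell_le_one (i k : ℕ) : S.slot i k + S.cell i ≤ 1 :=
  (S.slot_add_cell_le i k).trans (S.left_nonneg_and_add_len_le i _).2

lemma interval_succ_subset_slot (i k : ℕ) :
    S.interval (i + 1) k ⊆ Icc (S.slot i k) (S.slot i k + S.cell i) := by
  obtain ⟨hleft, hright, -⟩ := S.pick_spec (S.slot_nonneg i k) (S.slot_add_cell_le_one i k)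
  exact Icc_subset_Icc hleft hright

lemma interval_succ_subset (i k : ℕ) :
    S.interval (i + 1) k ⊆ S.interval i (k / S.branch i) :=
  (S.interval_succ_subset_slot i k).trans
    (Icc_subset_Icc (S.left_le_slot i k) (S.slot_add_cell_le i k))

lemma interval_succ_subset_target (i k : ℕ) : S.interval (i + 1) k ⊆ A i :=
  (S.pick_spec (S.slot_nonneg i k) (S.slot_add_cell_le_one i k)).2.2

lemma nodes_succ (i : ℕ) : S.nodes (i + 1) = S.nodes i * S.branch i :=
  Finset.prod_range_succ _ _

lemma two_pow_le_nodes (i : ℕ) : 2 ^ i ≤ S.nodes i := by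
  simpa [nodes] using Finset.pow_card_le_prod (Finset.range i) S.branch 2
    fun j _ => S.two_le_branch j

lemma address_succ_div_branch (i : ℕ) (t : ℝ) :
    S.address (i + 1) t / S.branch i = S.address i t := by
  have hbranch : (S.branch i : ℝ) ≠ 0 :=
    Nat.cast_ne_zero.2 (two_pos.trans_le (S.two_le_branch i)).ne'
  rw [address, address, ← Nat.floor_div_natCast, nodes_succ]
  congr 1
  push_cast
  field_simp

lemma point_mem_interval (t : ℝ) (i : ℕ) : S.point t ∈ S.interval i (S.address i t) := by
  have hanti : Antitone fun i => S.interval i (S.address i t) := antitone_nat_of_succ_le fun i => by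
    simpa only [address_succ_div_branch] using S.interval_succ_subset i (S.address (i + 1) t)
  exact mem_iInter.1 (ciSup_mem_iInter_Icc_of_antitone_Icc hanti
    fun i => le_add_of_nonneg_right (S.len_pos i).le) i

lemma point_mem_iInter (t : ℝ) : S.point t ∈ ⋂ i, A i :=
  mem_iInter.2 fun i => S.interval_succ_subset_target i _ (S.point_mem_interval t (i + 1))

lemma mul_cell_le_sub {i k k' : ℕ} {x x' : ℝ} (hparent : k / S.branch i = k' / S.branch i)
    (hk : k < k') (hx : x ∈ S.interval (i + 1) k) (hx' : x' ∈ S.interval (i + 1) k') :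
    ((k' : ℝ) - k) * S.cell i ≤ x' - x := by
  have hslot : S.slot i k' - S.slot i k = 2 * ((k' : ℝ) - k) * S.cell i := by
    have hdiv := congrArg (Nat.cast (R := ℝ)) (Nat.mod_add_div k (S.branch i))
    have hdiv' := congrArg (Nat.cast (R := ℝ)) (Nat.mod_add_div k' (S.branch i))
    rw [hparent] at hdiv
    push_cast at hdiv hdiv'
    rw [slot, slot, hparent]
    linear_combination 2 * S.cell i * (hdiv' - hdiv)
  have hgap : (1 : ℝ) ≤ k' - k := by
    rw [le_sub_iff_add_le']
    exact_mod_cast hk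
  have hx := (S.interval_succ_subset_slot i k hx).2
  have hx' := (S.interval_succ_subset_slot i k' hx').1
  nlinarith [S.cell_pos i]

lemma address_mono (i : ℕ) : Monotone (S.address i) := fun _ _ h =>
  Nat.floor_mono (mul_le_mul_of_nonneg_left h (Nat.cast_nonneg _))

lemma nodes_mul_sub_lt_one {i : ℕ} {t t' : ℝ} (ht : 0 ≤ t)
    (h : S.address i t = S.address i t') : S.nodes i * (t' - t) < 1 := by
  have hlower : (S.address i t : ℝ) ≤ S.nodes i * t := Nat.floor_le (by positivity)
  have hupper : S.nodes i * t' < S.address i t' + 1 := Nat.lt_floor_add_one _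
  rw [h] at hlower
  linarith

lemma exists_first_split {t t' : ℝ} (ht : 0 ≤ t) (htt' : t < t') (ht' : t' < 1) :
    ∃ i, S.address i t = S.address i t' ∧ S.address (i + 1) t < S.address (i + 1) t' := by
  by_contra! hsplit
  have hagree : ∀ i, S.address i t = S.address i t' := by
    intro i
    induction i with
    | zero =>
      have hzero : ∀ u : ℝ, u < 1 → S.address 0 u = 0 := fun u hu => by
        simpa [address, nodes, Nat.floor_eq_zero] using hu
      rw [hzero t (htt'.trans ht'), hzero t' ht']
    | succ i ih => exact (S.address_mono _ htt'.le).antisymm (hsplit i ih)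
  obtain ⟨i, hi⟩ := pow_unbounded_of_one_lt (1 / (t' - t)) one_lt_two
  rw [div_lt_iff₀ (sub_pos.2 htt')] at hi
  have hnodes : (2 : ℝ) ^ i ≤ S.nodes i := mod_cast S.two_pow_le_nodes i
  nlinarith [S.nodes_mul_sub_lt_one ht (hagree i)]

lemma len_mul_nodes_mul_sub_le {i : ℕ} {t t' : ℝ} (ht : 0 ≤ t)
    (hagree : S.address i t = S.address i t')
    (hsplit : S.address (i + 1) t < S.address (i + 1) t') :
    S.len i * (S.nodes i * (t' - t)) ≤ 8 * (S.point t' - S.point t) := by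
  have hsep := S.mul_cell_le_sub (by simpa only [address_succ_div_branch] using hagree) hsplit
    (S.point_mem_interval t (i + 1)) (S.point_mem_interval t' (i + 1))
  have hgap : (S.address (i + 1) t : ℝ) + 1 ≤ S.address (i + 1) t' := mod_cast hsplit
  have hlower : (S.address (i + 1) t : ℝ) ≤ S.nodes (i + 1) * t := Nat.floor_le (by positivity)
  have hupper : S.nodes (i + 1) * t' < S.address (i + 1) t' + 1 := Nat.lt_floor_add_one _
  have htt' : 0 < t' - t := by
    by_contra! h
    exact hsplit.not_ge (S.address_mono _ (by linarith))
  have hcell := S.cell_pos i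
  calc S.len i * (S.nodes i * (t' - t))
      ≤ S.branch i * (4 * S.cell i) * (S.nodes i * (t' - t)) := by
        gcongr
        exact S.len_le_branch_mul i
    _ = 4 * S.cell i * (S.nodes (i + 1) * (t' - t)) := by
        rw [nodes_succ]
        push_cast
        ring
    _ ≤ 4 * S.cell i * (2 * (S.address (i + 1) t' - S.address (i + 1) t)) := by
        refine mul_le_mul_of_nonneg_left ?_ (by positivity)
        linarith
    _ ≤ 8 * (S.point t' - S.point t) := by linarith

lemma one_le_nodes_mul_len_rpow {s : ℝ}
    (hcell : ∀ i, S.cell i ≤ S.len i / 4 * S.len (i + 1) ^ s) (i : ℕ) :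
    1 ≤ S.nodes i * S.len i ^ s := by
  cases i with
  | zero => simp [nodes, S.len_zero]
  | succ i =>
    have hlen := S.len_pos i
    have := Real.rpow_pos_of_pos (S.len_pos (i + 1)) s
    have hbranch : 1 ≤ S.branch i * S.len (i + 1) ^ s := by
      refine le_of_mul_le_mul_left ?_ hlen
      calc S.len i * 1 ≤ S.branch i * (4 * S.cell i) := by linarith [S.len_le_branch_mul i]
        _ ≤ S.branch i * (4 * (S.len i / 4 * S.len (i + 1) ^ s)) := by
          gcongr
          exact hcell i
        _ = S.len i * (S.branch i * S.len (i + 1) ^ s) := by ring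
    have hnodes : (1 : ℝ) ≤ S.nodes i := mod_cast Nat.one_le_two_pow.trans (S.two_pow_le_nodes i)
    rw [nodes_succ, Nat.cast_mul, mul_assoc]
    exact one_le_mul_of_one_le_of_one_le hnodes hbranch

lemma sub_le_eight_mul_rpow {s : ℝ} (hs0 : 0 ≤ s) (hs1 : s ≤ 1)
    (hcell : ∀ i, S.cell i ≤ S.len i / 4 * S.len (i + 1) ^ s) {t t' : ℝ} (ht : 0 ≤ t)
    (htt' : t < t') (ht' : t' < 1) : t' - t ≤ 8 * |S.point t' - S.point t| ^ s := by
  obtain ⟨i, hagree, hsplit⟩ := S.exists_first_split ht htt' ht'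
  have hlen := S.len_pos i
  have hnodes : 0 ≤ S.nodes i * (t' - t) := mul_nonneg (Nat.cast_nonneg _) (sub_nonneg.2 htt'.le)
  calc t' - t ≤ S.nodes i * S.len i ^ s * (t' - t) :=
        le_mul_of_one_le_left (sub_nonneg.2 htt'.le) (S.one_le_nodes_mul_len_rpow hcell i)
    _ = S.len i ^ s * (S.nodes i * (t' - t)) := by ring
    _ ≤ S.len i ^ s * (S.nodes i * (t' - t)) ^ s := by
        gcongr
        exact Real.self_le_rpow_of_le_one hnodes (S.nodes_mul_sub_lt_one ht hagree).le hs1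
    _ = (S.len i * (S.nodes i * (t' - t))) ^ s := (Real.mul_rpow hlen.le hnodes).symm
    _ ≤ (8 * |S.point t' - S.point t|) ^ s := by
        refine Real.rpow_le_rpow (mul_nonneg hlen.le hnodes)
          ((S.len_mul_nodes_mul_sub_le ht hagree hsplit).trans ?_) hs0
        gcongr
        exact le_abs_self _
    _ = 8 ^ s * |S.point t' - S.point t| ^ s := Real.mul_rpow (by norm_num) (abs_nonneg _)
    _ ≤ 8 * |S.point t' - S.point t| ^ s := by
        gcongr
        exact Real.rpow_le_self_of_one_le (by norm_num) hs1

lemma le_dimH_iInter {s : ℝ≥0} (hs0 : 0 < s) (hs1 : s ≤ 1)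
    (hcell : ∀ i, S.cell i ≤ S.len i / 4 * S.len (i + 1) ^ (s : ℝ)) : s ≤ dimH (⋂ i, A i) := by
  have hholder : ∀ t ∈ Ico (0 : ℝ) 1, ∀ t' ∈ Ico (0 : ℝ) 1,
      edist t t' ≤ (8 : ℝ≥0) * edist (S.point t) (S.point t') ^ (s : ℝ) := by
    intro t ht t' ht'
    wlog htt' : t < t' generalizing t t'
    · rcases (not_lt.1 htt').eq_or_lt with rfl | hlt
      · simp
      · rw [edist_comm t, edist_comm (S.point t)]
        exact this t' ht' t ht hlt
    rw [edist_comm t, edist_comm (S.point t), edist_dist, edist_dist, Real.dist_eq, Real.dist_eq,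
      abs_of_pos (sub_pos.2 htt'), ENNReal.ofReal_rpow_of_nonneg (abs_nonneg _) s.coe_nonneg,
      ← ENNReal.ofReal_coe_nnreal (p := 8), ← ENNReal.ofReal_mul (NNReal.coe_nonneg _)]
    exact ENNReal.ofReal_le_ofReal
      (S.sub_le_eight_mul_rpow s.coe_nonneg (mod_cast hs1) hcell ht.1 htt' ht'.2)
  calc (s : ℝ≥0∞) = s * dimH (Ico (0 : ℝ) 1) := by
        rw [Real.dimH_of_nonempty_interior ⟨1 / 2, by norm_num [interior_Ico]⟩]
        simp
    _ ≤ dimH (S.point '' Ico 0 1) := mul_dimH_le_dimH_image hs0 hholder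
    _ ≤ dimH (⋂ i, A i) := dimH_mono (image_subset_iff.2 fun t _ => S.point_mem_iInter t)

end IntervalScheme

lemma exists_intervalScheme {s : ℝ} (hs0 : 0 ≤ s) {E : ℕ → Set ℝ}
    (hE : ∀ δ > 0, ∃ᶠ n in atTop, ∃ L r : ℝ, 0 < L ∧ 0 < r ∧ r ≤ 1 ∧ L ≤ δ * r ^ s ∧
      IntervalUbiquitous (E n) L r) :
    ∃ n : ℕ → ℕ, StrictMono n ∧ ∃ S : IntervalScheme (E ∘ n),
      ∀ i, S.cell i ≤ S.len i / 4 * S.len (i + 1) ^ s := by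
  have hstep : ∀ p : ℕ × Ioi (0 : ℝ), ∃ q : ℕ × Ioi (0 : ℝ), ∃ L : ℝ, p.1 < q.1 ∧ 0 < L ∧
      4 * L ≤ p.2 ∧ L ≤ p.2 / 4 * (q.2 : ℝ) ^ s ∧ IntervalUbiquitous (E q.1) L q.2 := by
    rintro ⟨n, l, hl : 0 < l⟩
    obtain ⟨m, hnm, L, r, hL, hr0, hr1, hLr, hubiq⟩ :=
      frequently_atTop.1 (hE (l / 4) (by positivity)) (n + 1)
    have hLl : L ≤ l / 4 * 1 := hLr.trans (by gcongr; exact Real.rpow_le_one hr0.le hr1 hs0)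
    exact ⟨⟨m, r, hr0⟩, L, hnm, hL, by dsimp only; linarith, hLr, hubiq⟩
  choose next cell hlt hcell hfour hrpow hubiq using hstep
  let node : ℕ → ℕ × Ioi (0 : ℝ) := fun i => next^[i] (0, ⟨1, mem_Ioi.2 one_pos⟩)
  have hnode : ∀ i, node (i + 1) = next (node i) := fun i => Function.iterate_succ_apply' _ _ _
  refine ⟨fun i => (node (i + 1)).1, strictMono_nat_of_lt_succ fun i => ?_,
    { len := fun i => (node i).2
      cell := fun i => cell (node i)
      len_zero := rfl
      len_pos := fun i => (node i).2.2
      cell_pos := fun i => hcell _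
      four_mul_cell_le := fun i => hfour _
      ubiquitous := fun i => ?_ }, fun i => ?_⟩
  · simpa only [hnode (i + 1)] using hlt (node (i + 1))
  · simpa only [Function.comp_apply, hnode] using hubiq (node i)
  · simpa only [hnode] using hrpow (node i)

theorem le_dimH_limsup_of_intervalUbiquitous {s : ℝ≥0} (hs1 : s ≤ 1) {E : ℕ → Set ℝ}
    (hE : ∀ δ > 0, ∃ᶠ n in atTop, ∃ L r : ℝ, 0 < L ∧ 0 < r ∧ r ≤ 1 ∧ L ≤ δ * r ^ (s : ℝ) ∧
      IntervalUbiquitous (E n) L r) :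
    s ≤ dimH (limsup E atTop) := by
  rcases eq_zero_or_pos s with rfl | hs0
  · simp
  obtain ⟨n, hn, S, hcell⟩ := exists_intervalScheme s.coe_nonneg hE
  refine (S.le_dimH_iInter hs0 hs1 hcell).trans (dimH_mono fun x hx => ?_)
  exact mem_limsup_iff_frequently_mem.2
    (hn.tendsto_atTop.frequently (.of_forall fun i => mem_iInter.1 hx i))

/-! ### Cylinders of the β-transformation -/

section BetaCylinders

variable {β : ℝ}

lemma betaT_iterate_succ (n : ℕ) (x : ℝ) :
    (betaT β)^[n + 1] x = Int.fract (β * (betaT β)^[n] x) :=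
  Function.iterate_succ_apply' _ _ _

lemma betaT_iterate_mem_Ico {x : ℝ} (hx : x ∈ Ico (0 : ℝ) 1) (n : ℕ) :
    (betaT β)^[n] x ∈ Ico (0 : ℝ) 1 := by
  cases n with
  | zero => exact hx
  | succ n =>
    rw [betaT_iterate_succ]
    exact ⟨Int.fract_nonneg _, Int.fract_lt_one _⟩

lemma betaT_iterate_succ_le (hβ : 0 ≤ β) {x : ℝ} (hx : x ∈ Ico (0 : ℝ) 1) (n : ℕ) :
    (betaT β)^[n + 1] x ≤ β * (betaT β)^[n] x := by
  rw [betaT_iterate_succ]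
  exact sub_le_self _
    (mod_cast Int.floor_nonneg.2 (mul_nonneg hβ (betaT_iterate_mem_Ico hx n).1))

lemma betaT_iterate_le_pow_mul (hβ : 0 ≤ β) {x : ℝ} (hx : x ∈ Ico (0 : ℝ) 1) (n : ℕ) :
    (betaT β)^[n] x ≤ β ^ n * x := by
  induction n with
  | zero => simp
  | succ n ih =>
    rw [pow_succ', mul_assoc]
    exact (betaT_iterate_succ_le hβ hx n).trans (mul_le_mul_of_nonneg_left ih hβ)

lemma betaT_iterate_eq_sub (hβ : 0 < β) {x y : ℝ} (hx : x ∈ Ico (0 : ℝ) 1) (hyx : y ≤ x) {n : ℕ}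
    (h : β ^ n * (x - y) ≤ (betaT β)^[n] x) :
    (betaT β)^[n] y = (betaT β)^[n] x - β ^ n * (x - y) := by
  induction n with
  | zero => simp
  | succ n ih =>
    have hprev : β ^ n * (x - y) ≤ (betaT β)^[n] x := by
      refine le_of_mul_le_mul_left ?_ hβ
      rw [← mul_assoc, ← pow_succ']
      exact h.trans (betaT_iterate_succ_le hβ.le hx n)
    have hnonneg : 0 ≤ β ^ (n + 1) * (x - y) := mul_nonneg (by positivity) (sub_nonneg.2 hyx)
    have hlt := (betaT_iterate_mem_Ico (β := β) hx (n + 1)).2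
    rw [betaT_iterate_succ n y, ih hprev, Int.fract_eq_iff]
    refine ⟨sub_nonneg.2 h, by linarith, ⌊β * (betaT β)^[n] x⌋, ?_⟩
    rw [betaT_iterate_succ, Int.fract, pow_succ]
    ring

/-- The left endpoints of the cylinders of order `n`, that is, of the maximal intervals on which
the `n`-th iterate of the `β`-transformation is affine. -/
def cylinderEnds (β : ℝ) (n : ℕ) : Set ℝ := {a | a ∈ Ico (0 : ℝ) 1 ∧ (betaT β)^[n] a = 0}

/-- The left endpoint of the cylinder of order `n` that contains `x`. -/
noncomputable def cylinderEnd (β : ℝ) (n : ℕ) (x : ℝ) : ℝ := x - (betaT β)^[n] x / β ^ n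

/-- The left endpoints that appear for the first time at order `k`. -/
def newCylinderEnds (β : ℝ) (k : ℕ) : Set ℝ :=
  {b | b ∈ cylinderEnds β k ∧ ∀ j < k, (betaT β)^[j] b ≠ 0}

/-- The cylinder of order `q` with left endpoint `a` is full, that is, has the maximal length
`β⁻ᑫ`. -/
def IsFullCylinder (β : ℝ) (q : ℕ) (a : ℝ) : Prop :=
  ∀ y, a ≤ y → β ^ q * (y - a) < 1 → (betaT β)^[q] y = β ^ q * (y - a)

lemma cylinderEnds_mono (β : ℝ) : Monotone (cylinderEnds β) :=
  monotone_nat_of_le_succ fun n a ha => ⟨ha.1, by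
    rw [betaT_iterate_succ, ha.2, mul_zero, Int.fract_zero]⟩

lemma pow_mul_sub_cylinderEnd (hβ : β ≠ 0) (n : ℕ) (x : ℝ) :
    β ^ n * (x - cylinderEnd β n x) = (betaT β)^[n] x := by
  rw [cylinderEnd, sub_sub_cancel, mul_div_cancel₀ _ (pow_ne_zero n hβ)]

lemma cylinderEnd_mem_Ioc (hβ : 0 < β) {x : ℝ} (hx : x ∈ Ico (0 : ℝ) 1) (n : ℕ) :
    cylinderEnd β n x ∈ Ioc (x - 1 / β ^ n) x := by
  obtain ⟨h0, h1⟩ := betaT_iterate_mem_Ico (β := β) hx n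
  exact ⟨sub_lt_sub_left (div_lt_div_of_pos_right h1 (by positivity)) x,
    sub_le_self x (by positivity)⟩

lemma cylinderEnd_mem_cylinderEnds (hβ : 0 < β) {x : ℝ} (hx : x ∈ Ico (0 : ℝ) 1) (n : ℕ) :
    cylinderEnd β n x ∈ cylinderEnds β n := by
  have hle := (cylinderEnd_mem_Ioc hβ hx n).2
  have heq := pow_mul_sub_cylinderEnd hβ.ne' n x
  refine ⟨⟨?_, hle.trans_lt hx.2⟩, ?_⟩
  · rw [cylinderEnd, sub_nonneg, div_le_iff₀' (by positivity)]
    exact betaT_iterate_le_pow_mul hβ.le hx n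
  · rw [betaT_iterate_eq_sub hβ hx hle heq.le, heq, sub_self]

lemma exists_mem_newCylinderEnds {n : ℕ} {a : ℝ} (ha : a ∈ cylinderEnds β n) :
    ∃ k ≤ n, a ∈ newCylinderEnds β k := by
  classical
  have hzero : ∃ k, (betaT β)^[k] a = 0 := ⟨n, ha.2⟩
  exact ⟨Nat.find hzero, Nat.find_min' hzero ha.2, ⟨ha.1, Nat.find_spec hzero⟩,
    fun j hj => Nat.find_min hzero hj⟩

lemma betaT_iterate_eq_one_sub (hβ : 0 < β) {k : ℕ} {b y : ℝ} (hb : b ∈ newCylinderEnds β k)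
    (hy0 : 0 ≤ y) (hyb : y < b) (h : β ^ k * (b - y) ≤ 1) :
    (betaT β)^[k] y = 1 - β ^ k * (b - y) := by
  obtain ⟨⟨hbI, hb0⟩, hnew⟩ := hb
  cases k with
  | zero =>
    rw [Function.iterate_zero_apply] at hb0
    linarith
  | succ k =>
    have hpos : 0 < (betaT β)^[k] b :=
      (betaT_iterate_mem_Ico hbI k).1.lt_of_ne' (hnew k k.lt_succ_self)
    rw [betaT_iterate_succ, Int.fract_eq_iff] at hb0
    obtain ⟨-, -, j, hj⟩ := hb0
    rw [sub_zero] at hj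
    have hj1 : (1 : ℝ) ≤ j := by
      have : (0 : ℝ) < j := hj ▸ mul_pos hβ hpos
      exact_mod_cast this
    have hk : β ^ k * (b - y) ≤ (betaT β)^[k] b := by
      refine le_of_mul_le_mul_left ?_ hβ
      rw [← mul_assoc, ← pow_succ', hj]
      exact h.trans hj1
    have hlt : 0 < β ^ (k + 1) * (b - y) := mul_pos (by positivity) (sub_pos.2 hyb)
    rw [betaT_iterate_succ, betaT_iterate_eq_sub hβ hbI hyb.le hk, Int.fract_eq_iff]
    refine ⟨sub_nonneg.2 h, by linarith, j - 1, ?_⟩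
    push_cast
    rw [← hj, pow_succ]
    ring

lemma one_le_pow_mul_sub_of_lt (hβ : 0 < β) {k : ℕ} {b b' : ℝ} (hb : b ∈ newCylinderEnds β k)
    (hb' : b' ∈ newCylinderEnds β k) (hlt : b < b') : 1 ≤ β ^ k * (b' - b) := by
  by_contra! h
  have hone := betaT_iterate_eq_one_sub hβ hb' hb.1.1.1 hlt h.le
  rw [hb.1.2] at hone
  linarith

lemma IsFullCylinder.mono (hβ : 1 ≤ β) {k q : ℕ} {a : ℝ} (h : IsFullCylinder β k a)
    (hkq : k ≤ q) : IsFullCylinder β q a := by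
  induction q, hkq using Nat.le_induction with
  | base => exact h
  | succ q _ ih =>
    intro y hay hy
    have hnonneg : 0 ≤ β ^ q * (y - a) := mul_nonneg (by positivity) (sub_nonneg.2 hay)
    rw [pow_succ', mul_assoc] at hy ⊢
    rw [betaT_iterate_succ, ih y hay (lt_of_le_of_lt (le_mul_of_one_le_left hnonneg hβ) hy)]
    exact Int.fract_eq_self.2 ⟨by positivity, hy⟩

lemma isFullCylinder_sub (hβ : 0 < β) {k : ℕ} {b : ℝ} (hb : b ∈ newCylinderEnds β k)
    (h : 1 / β ^ k ≤ b) : IsFullCylinder β k (b - 1 / β ^ k) := by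
  intro y hay hy
  have hpow : β ^ k * (1 / β ^ k) = 1 := mul_one_div_cancel (by positivity)
  have hyb : β ^ k * (y - (b - 1 / β ^ k)) = 1 - β ^ k * (b - y) := by
    linear_combination hpow
  have hlt : y < b := by
    by_contra! hby
    nlinarith [mul_nonneg (pow_nonneg hβ.le k) (sub_nonneg.2 hby)]
  rw [hyb]
  refine betaT_iterate_eq_one_sub hβ hb ((sub_nonneg.2 h).trans hay) hlt ?_
  have : 0 ≤ β ^ k * (y - (b - 1 / β ^ k)) := mul_nonneg (by positivity) (sub_nonneg.2 hay)
  linarith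

lemma card_le_of_separated {S : Finset ℝ} {b v l : ℝ} (hb : 0 ≤ b) (hl : 0 ≤ l)
    (hS : ↑S ⊆ Icc v (v + l)) (hsep : ∀ x ∈ S, ∀ y ∈ S, x < y → 1 ≤ b * (y - x)) :
    (S.card : ℝ) ≤ b * l + 1 := by
  have hfloor : StrictMonoOn (fun x => ⌊b * (x - v)⌋₊) S := fun x hx y hy hxy => by
    rw [← Nat.succ_le_iff, Nat.succ_eq_add_one,
      ← Nat.floor_add_one (mul_nonneg hb (sub_nonneg.2 (hS hx).1))]
    exact Nat.floor_mono (by linarith [hsep x hx y hy hxy])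
  have hmaps : ∀ x ∈ S, ⌊b * (x - v)⌋₊ ∈ Finset.range (⌊b * l⌋₊ + 1) := fun x hx => by
    rw [Finset.mem_range_succ_iff]
    exact Nat.floor_mono (mul_le_mul_of_nonneg_left (sub_le_iff_le_add'.2 (hS hx).2) hb)
  have hcard := Finset.card_le_card_of_injOn _ hmaps hfloor.injOn
  rw [Finset.card_range] at hcard
  calc (S.card : ℝ) ≤ ⌊b * l⌋₊ + 1 := mod_cast hcard
    _ ≤ b * l + 1 := by gcongr; exact Nat.floor_le (by positivity)

lemma geom_sum_le_pow_div (hβ : 1 < β) (n : ℕ) :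
    ∑ k ∈ Finset.range n, β ^ k ≤ β ^ n / (β - 1) := by
  rw [geom_sum_eq hβ.ne']
  exact div_le_div_of_nonneg_right (sub_le_self _ zero_le_one) (sub_pos.2 hβ).le

lemma card_cylinderEnds_le (hβ : 1 < β) {S : Finset ℝ} {n : ℕ} {v l : ℝ} (hl : 0 ≤ l)
    (hS : ↑S ⊆ cylinderEnds β n ∩ Icc v (v + l)) :
    (S.card : ℝ) ≤ β ^ (n + 1) / (β - 1) * l + (n + 1) := by
  classical
  let F : ℕ → Finset ℝ := fun k => {b ∈ S | b ∈ newCylinderEnds β k}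
  have hcover : S ⊆ (Finset.range (n + 1)).biUnion F := fun b hb => by
    obtain ⟨k, hk, hbk⟩ := exists_mem_newCylinderEnds (hS hb).1
    exact Finset.mem_biUnion.2
      ⟨k, Finset.mem_range_succ_iff.2 hk, Finset.mem_filter.2 ⟨hb, hbk⟩⟩
  have hF : ∀ k, ((F k).card : ℝ) ≤ β ^ k * l + 1 := fun k =>
    card_le_of_separated (by positivity) hl (fun b hb => (hS (Finset.mem_filter.1 hb).1).2)
      fun b hb b' hb' => one_le_pow_mul_sub_of_lt (by positivity) (Finset.mem_filter.1 hb).2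
        (Finset.mem_filter.1 hb').2
  calc (S.card : ℝ) ≤ ∑ k ∈ Finset.range (n + 1), ((F k).card : ℝ) :=
        mod_cast (Finset.card_le_card hcover).trans Finset.card_biUnion_le
    _ ≤ ∑ k ∈ Finset.range (n + 1), (β ^ k * l + 1) := Finset.sum_le_sum fun k _ => hF k
    _ = (∑ k ∈ Finset.range (n + 1), β ^ k) * l + (n + 1) := by
        simp [Finset.sum_add_distrib, Finset.sum_mul]
    _ ≤ β ^ (n + 1) / (β - 1) * l + (n + 1) := by
        gcongr
        exact geom_sum_le_pow_div hβ _

lemma cylinderEnds_finite_and_ncard_le (hβ : 1 < β) (n : ℕ) :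
    (cylinderEnds β n).Finite ∧ ((cylinderEnds β n).ncard : ℝ) ≤ 2 * (β ^ (n + 1) / (β - 1)) := by
  have hcard : ∀ S : Finset ℝ, ↑S ⊆ cylinderEnds β n →
      (S.card : ℝ) ≤ 2 * (β ^ (n + 1) / (β - 1)) := fun S hS => by
    have hIcc : ↑S ⊆ cylinderEnds β n ∩ Icc (0 : ℝ) (0 + 1) := fun b hb =>
      ⟨hS hb, (hS hb).1.1, by linarith [(hS hb).1.2]⟩
    have hn : (n + 1 : ℝ) ≤ ∑ k ∈ Finset.range (n + 1), β ^ k := by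
      simpa using Finset.card_nsmul_le_sum (Finset.range (n + 1)) (β ^ ·) 1
        fun k _ => one_le_pow₀ hβ.le
    linarith [card_cylinderEnds_le hβ zero_le_one hIcc, geom_sum_le_pow_div hβ (n + 1)]
  have hfin : (cylinderEnds β n).Finite := by
    by_contra hinf
    obtain ⟨S, hS, hSn⟩ :=
      Set.Infinite.exists_subset_card_eq hinf (⌊2 * (β ^ (n + 1) / (β - 1))⌋₊ + 1)
    have := (Nat.lt_floor_add_one _).trans_le (mod_cast hSn ▸ hcard S hS)
    exact this.false
  refine ⟨hfin, ?_⟩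
  rw [ncard_eq_toFinset_card _ hfin]
  exact hcard _ hfin.coe_toFinset.subset

lemma exists_finset_cylinderEnds (hβ : 0 < β) {q J : ℕ} {v : ℝ} (hv : 0 ≤ v)
    (hvJ : v + J / β ^ q < 1) :
    ∃ S : Finset ℝ, S.card = J ∧ ↑S ⊆ cylinderEnds β q ∩ Icc v (v + J / β ^ q) := by
  let x : ℕ → ℝ := fun j => v + (j + 1) / β ^ q
  have hx_le : ∀ j < J, x j ≤ v + J / β ^ q := fun j hj => by
    have : (j : ℝ) + 1 ≤ J := mod_cast hj
    dsimp only [x]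
    gcongr
  have hx : ∀ j < J, x j ∈ Ico (0 : ℝ) 1 := fun j hj =>
    ⟨by positivity, (hx_le j hj).trans_lt hvJ⟩
  have ha : ∀ j < J, cylinderEnd β q (x j) ∈ Ioc (v + j / β ^ q) (x j) := fun j hj => by
    have := cylinderEnd_mem_Ioc hβ (hx j hj) q
    rwa [show x j - 1 / β ^ q = v + j / β ^ q by ring] at this
  have hmono : StrictMonoOn (fun j => cylinderEnd β q (x j)) (Finset.range J) := by
    intro i hi j hj hij
    rw [Finset.coe_range, mem_Iio] at hi hj
    have hij' : (i : ℝ) + 1 ≤ j := mod_cast hij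
    calc cylinderEnd β q (x i) ≤ v + (i + 1) / β ^ q := (ha i hi).2
      _ ≤ v + j / β ^ q := by gcongr
      _ < cylinderEnd β q (x j) := (ha j hj).1
  refine ⟨(Finset.range J).image fun j => cylinderEnd β q (x j), ?_, ?_⟩
  · rw [Finset.card_image_of_injOn hmono.injOn, Finset.card_range]
  · simp only [Finset.coe_image, Finset.coe_range, image_subset_iff]
    intro j hj
    have hvj : 0 ≤ (j : ℝ) / β ^ q := by positivity
    exact ⟨cylinderEnd_mem_cylinderEnds hβ (hx j hj) q,
      by linarith [(ha j hj).1], (ha j hj).2.trans (hx_le j hj)⟩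

-- Ends of order at most `q - M` are too sparse to account for all `2q + 3` ends of order `q`.
lemma exists_mem_cylinderEnds_notMem_sub (hβ : 1 < β) {M q : ℕ} {v : ℝ}
    (hM : 2 * β / (β - 1) ≤ β ^ M) (hMq : M ≤ q) (hv : 0 ≤ v)
    (hv1 : v + (2 * q + 3) / β ^ q < 1) :
    ∃ b ∈ cylinderEnds β q ∩ Icc v (v + (2 * q + 3) / β ^ q), b ∉ cylinderEnds β (q - M) := by
  have hJ : ((2 * q + 3 : ℕ) : ℝ) = 2 * q + 3 := by push_cast; ring
  obtain ⟨S, hcard, hS⟩ :=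
    exists_finset_cylinderEnds (J := 2 * q + 3) (by positivity) hv (by rwa [hJ])
  rw [hJ] at hS
  by_contra! hzero
  have hβ1 : 0 < β - 1 := sub_pos.2 hβ
  have hS' : ↑S ⊆ cylinderEnds β (q - M) ∩ Icc v (v + (2 * q + 3) / β ^ q) := fun b hb =>
    ⟨hzero b (hS hb), (hS hb).2⟩
  have hcard' := card_cylinderEnds_le hβ (by positivity) hS'
  have hhalf : β ^ (q - M + 1) / (β - 1) * ((2 * q + 3) / β ^ q) ≤ (2 * q + 3) / 2 := by
    rw [div_le_iff₀ hβ1] at hM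
    have hpow : β ^ q = β ^ (q - M) * β ^ M := by rw [← pow_add, Nat.sub_add_cancel hMq]
    rw [div_mul_div_comm, div_le_div_iff₀ (by positivity) two_pos, hpow]
    calc β ^ (q - M + 1) * (2 * q + 3) * 2 = (2 * q + 3) * β ^ (q - M) * (2 * β) := by ring
      _ ≤ (2 * q + 3) * β ^ (q - M) * (β ^ M * (β - 1)) := by gcongr
      _ = (2 * q + 3) * ((β - 1) * (β ^ (q - M) * β ^ M)) := by ring
  have hqM : ((q - M : ℕ) : ℝ) ≤ q := mod_cast q.sub_le M
  rw [hcard, hJ] at hcard'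
  linarith

theorem exists_isFullCylinder (hβ : 1 < β) :
    ∃ K > 0, ∀ (q : ℕ) (v : ℝ), 0 ≤ v → v + K * (q + 1) / β ^ q ≤ 1 →
      ∃ a, v ≤ a ∧ a + 1 / β ^ q ≤ v + K * (q + 1) / β ^ q ∧ IsFullCylinder β q a := by
  obtain ⟨M, hM⟩ := pow_unbounded_of_one_lt (2 * β / (β - 1)) hβ
  refine ⟨β ^ M + 4, by positivity, fun q v hv hv1 => ?_⟩
  have hMq : M ≤ q := by
    by_contra! hqM
    have hpow : β ^ q ≤ β ^ M := pow_le_pow_right₀ hβ.le hqM.le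
    have : 1 < (β ^ M + 4) * (q + 1) / β ^ q := by
      rw [one_lt_div (by positivity)]
      nlinarith [pow_pos (one_pos.trans hβ) M, (Nat.cast_nonneg q : (0 : ℝ) ≤ q)]
    linarith
  have hroom : v + β ^ M / β ^ q + (2 * q + 3) / β ^ q + 1 / β ^ q ≤
      v + (β ^ M + 4) * (q + 1) / β ^ q := by
    rw [add_assoc, add_assoc, ← add_div, ← add_div]
    gcongr
    nlinarith [pow_pos (one_pos.trans hβ) M, (Nat.cast_nonneg q : (0 : ℝ) ≤ q)]
  have hunit : 0 < 1 / β ^ q := by positivity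
  obtain ⟨b, ⟨hbq, hbl, hbr⟩, hb⟩ := exists_mem_cylinderEnds_notMem_sub hβ hM.le hMq
    (v := v + β ^ M / β ^ q) (by positivity) (by linarith)
  obtain ⟨k, hkq, hbk⟩ := exists_mem_newCylinderEnds hbq
  have hqk : q ≤ k + M := by
    by_contra! hkM
    exact hb (cylinderEnds_mono β (Nat.le_sub_of_add_le hkM.le) hbk.1)
  have hlen : 1 / β ^ k ≤ β ^ M / β ^ q := by
    rw [div_le_div_iff₀ (by positivity) (by positivity), one_mul, ← pow_add, add_comm]
    exact pow_le_pow_right₀ hβ.le hqk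
  exact ⟨b - 1 / β ^ k, by linarith, by linarith [one_div_pos.2 (pow_pos (one_pos.trans hβ) k)],
    (isFullCylinder_sub (by positivity) hbk (by linarith)).mono hβ.le hkq⟩

end BetaCylinders

/-! ### Shrinking targets -/

section TargetSets

variable {β : ℝ}

lemma exists_coe_eq_abs_eq_norm (θ : UnitAddCircle) :
    ∃ t : ℝ, (t : UnitAddCircle) = θ ∧ |t| = ‖θ‖ := by
  induction θ using QuotientAddGroup.induction_on with | H x =>
  refine ⟨x - round x, ?_, (UnitAddCircle.norm_eq).symm⟩
  rw [AddCircle.coe_sub, sub_eq_self]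
  exact (AddCircle.coe_eq_zero_iff 1).2 ⟨round x, by simp⟩

lemma exists_lift_unitAddCircle {α : Type*} {g : α → UnitAddCircle} {s : Set α} {a : α}
    (hg : ∀ x ∈ s, dist (g x) (g a) ≤ 1 / 4) :
    ∃ F : α → ℝ, F a ∈ Ico (0 : ℝ) 1 ∧ (∀ x, (F x : UnitAddCircle) = g x) ∧
      ∀ x ∈ s, ∀ y ∈ s, dist (F x) (F y) = dist (g x) (g y) := by
  choose t ht htn using fun x => exists_coe_eq_abs_eq_norm (g x - g a)
  obtain ⟨A, hA, hAg⟩ : ∃ A ∈ Ico (0 : ℝ) 1, (A : UnitAddCircle) = g a :=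
    ⟨AddCircle.equivIco 1 0 (g a), by simpa using (AddCircle.equivIco 1 0 (g a)).2,
      AddCircle.coe_equivIco⟩
  have hta : t a = 0 := abs_eq_zero.1 (by rw [htn, sub_self, norm_zero])
  have hF : ∀ x, ((A + t x : ℝ) : UnitAddCircle) = g x := fun x => by
    rw [AddCircle.coe_add, hAg, ht, add_sub_cancel]
  have hsmall : ∀ x ∈ s, |t x| ≤ 1 / 4 := fun x hx => by
    rw [htn, ← dist_eq_norm]
    exact hg x hx
  refine ⟨fun x => A + t x, by simpa [hta] using hA, hF, fun x hx y hy => ?_⟩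
  rw [← hF x, ← hF y, dist_unitAddCircle_coe_eq, Real.dist_eq]
  rw [add_sub_add_left_eq_sub]
  linarith [abs_sub (t x) (t y), hsmall x hx, hsmall y hy]

lemma exists_coe_mul_sub_eq {g : ℝ → UnitAddCircle} {a l b : ℝ} {c : ℝ≥0} (hl : 0 ≤ l)
    (hg : LipschitzOnWith c g (Icc a (a + l))) (hc : c * l ≤ 1 / 4) (hb : 1 + c * l ≤ b * l) :
    ∃ x ∈ Icc a (a + l), ((b * (x - a) : ℝ) : UnitAddCircle) = g x := by
  have hal : a ≤ a + l := le_add_of_nonneg_right hl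
  have hdist : ∀ x ∈ Icc a (a + l), dist (g x) (g a) ≤ c * l := fun x hx => by
    refine (hg.dist_le_mul x hx a (left_mem_Icc.2 hal)).trans ?_
    rw [Real.dist_eq, abs_of_nonneg (sub_nonneg.2 hx.1)]
    exact mul_le_mul_of_nonneg_left (sub_le_iff_le_add'.2 hx.2) c.coe_nonneg
  obtain ⟨F, hFa, hFg, hF⟩ := exists_lift_unitAddCircle fun x hx => (hdist x hx).trans hc
  have hFcont : ContinuousOn F (Icc a (a + l)) :=
    (LipschitzOnWith.of_dist_le_mul (K := c) fun x hx y hy =>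
      (hF x hx y hy).trans_le (hg.dist_le_mul x hx y hy)).continuousOn
  have hFl : F (a + l) ≤ F a + c * l := by
    have := (hF _ (right_mem_Icc.2 hal) _ (left_mem_Icc.2 hal)).trans_le
      (hdist _ (right_mem_Icc.2 hal))
    linarith [(abs_le.1 this).2]
  have hcont : ContinuousOn (fun x => b * (x - a)) (Icc a (a + l)) := by fun_prop
  obtain ⟨x, hx, hxF⟩ := isPreconnected_Icc.intermediate_value₂ (left_mem_Icc.2 hal)
    (right_mem_Icc.2 hal) hcont hFcont (by simpa using hFa.1)
    (by rw [add_sub_cancel_left]; linarith [hFa.2])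
  exact ⟨x, hx, by rw [hxF, hFg]⟩

lemma IsFullCylinder.coe_betaT_iterate_succ (hβ : 0 < β) {q : ℕ} {a y : ℝ}
    (h : IsFullCylinder β q a) (hy : y ∈ Ico a (a + 1 / β ^ q)) :
    ((betaT β)^[q + 1] y : UnitAddCircle) = (β ^ (q + 1) * (y - a) : ℝ) := by
  have hlt : β ^ q * (y - a) < 1 := by
    rw [← lt_div_iff₀' (by positivity)]
    exact sub_lt_iff_lt_add'.2 hy.2
  rw [betaT_iterate_succ, h y hy.1 hlt, AddCircle.coe_fract, ← mul_assoc, ← pow_succ']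

lemma IsFullCylinder.dist_betaT_iterate_succ_le (hβ : 0 < β) {q : ℕ} {a x y : ℝ}
    (h : IsFullCylinder β q a) (hx : x ∈ Ico a (a + 1 / β ^ q))
    (hy : y ∈ Ico a (a + 1 / β ^ q)) :
    dist ((betaT β)^[q + 1] x : UnitAddCircle) ((betaT β)^[q + 1] y : ℝ) ≤
      β ^ (q + 1) * |x - y| := by
  rw [h.coe_betaT_iterate_succ hβ hx, h.coe_betaT_iterate_succ hβ hy]
  refine (dist_unitAddCircle_coe_le _ _).trans_eq ?_
  rw [← mul_sub, sub_sub_sub_cancel_right, abs_mul, abs_of_pos (pow_pos hβ _)]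

lemma IsFullCylinder.exists_betaT_iterate_succ_eq (hβ : 1 < β) {q : ℕ} {a : ℝ}
    (h : IsFullCylinder β q a) {g : ℝ → UnitAddCircle} {c : ℝ≥0}
    (hg : LipschitzOnWith c g (Ico a (a + 1 / β ^ q)))
    (hc : c / β ^ q ≤ min (1 / 4) ((β - 1) / 2)) :
    ∃ x ∈ Icc a (a + (1 + β) / 2 / β ^ (q + 1)), ((betaT β)^[q + 1] x : UnitAddCircle) = g x := by
  obtain ⟨hc4, hc2⟩ := le_min_iff.1 hc
  have hlt : (1 + β) / 2 / β ^ (q + 1) < 1 / β ^ q := by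
    rw [pow_succ', ← div_div, div_lt_div_iff_of_pos_right (by positivity),
      div_lt_one (by positivity)]
    linarith
  have hcl : c * ((1 + β) / 2 / β ^ (q + 1)) ≤ c / β ^ q := by
    rw [div_eq_mul_one_div (c : ℝ)]
    exact mul_le_mul_of_nonneg_left hlt.le c.coe_nonneg
  have hsub : Icc a (a + (1 + β) / 2 / β ^ (q + 1)) ⊆ Ico a (a + 1 / β ^ q) :=
    Icc_subset_Ico_right (by linarith)
  obtain ⟨x, hx, hxg⟩ := exists_coe_mul_sub_eq (b := β ^ (q + 1)) (by positivity)
    (hg.mono hsub) (hcl.trans hc4) (by rw [mul_div_cancel₀ _ (by positivity)]; linarith)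
  exact ⟨x, hx, by rw [h.coe_betaT_iterate_succ (by positivity) (hsub hx), hxg]⟩

/-- The points of `[0,1)` whose `n`-th iterate under the `β`-transformation is within distance `p`
of the moving target `g x` on the circle. -/
def targetSet (β : ℝ) (g : ℝ → UnitAddCircle) (p : ℝ) (n : ℕ) : Set ℝ :=
  {x | x ∈ Ico (0 : ℝ) 1 ∧ dist ((betaT β)^[n] x : UnitAddCircle) (g x) < p}

lemma IsFullCylinder.exists_Icc_subset_targetSet (hβ : 1 < β) {q : ℕ} {a r p : ℝ}
    (h : IsFullCylinder β q a) (ha0 : 0 ≤ a) (ha1 : a + 1 / β ^ q ≤ 1) {g : ℝ → UnitAddCircle}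
    {c : ℝ≥0} (hg : LipschitzOnWith c g (Ico 0 1)) (hc : c / β ^ q ≤ min (1 / 4) ((β - 1) / 2))
    (hr0 : 0 ≤ r) (hr : β ^ (q + 1) * r ≤ (β - 1) / 4) (hp : (β ^ (q + 1) + c) * r < p) :
    ∃ x, a ≤ x ∧ x + r ≤ a + 1 / β ^ q ∧ Icc x (x + r) ⊆ targetSet β g p (q + 1) := by
  have hβ0 : 0 < β := by positivity
  have hsub : Ico a (a + 1 / β ^ q) ⊆ Ico 0 1 := Ico_subset_Ico ha0 ha1
  obtain ⟨x, hx, hxg⟩ := h.exists_betaT_iterate_succ_eq hβ (hg.mono hsub) hc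
  have hxr : x + r < a + 1 / β ^ q := by
    have hroom : (1 + β) / 2 / β ^ (q + 1) + r < 1 / β ^ q := by
      have hunit : 1 / β ^ q = β / β ^ (q + 1) := by rw [pow_succ]; field_simp
      rw [hunit, lt_div_iff₀' (by positivity), mul_add, mul_div_cancel₀ _ (by positivity)]
      linarith
    linarith [hx.2]
  have hxI : x ∈ Ico a (a + 1 / β ^ q) := ⟨hx.1, by linarith⟩
  refine ⟨x, hx.1, hxr.le, fun y hy => ?_⟩
  have hyI : y ∈ Ico a (a + 1 / β ^ q) := ⟨hx.1.trans hy.1, hy.2.trans_lt hxr⟩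
  have hyx : |y - x| ≤ r := abs_le.2 ⟨by linarith [hy.1], by linarith [hy.2]⟩
  refine ⟨hsub hyI, lt_of_le_of_lt ?_ hp⟩
  calc dist ((betaT β)^[q + 1] y : UnitAddCircle) (g y)
      ≤ dist ((betaT β)^[q + 1] y : UnitAddCircle) ((betaT β)^[q + 1] x : ℝ) +
          dist (g x) (g y) := hxg ▸ dist_triangle _ _ _
    _ ≤ β ^ (q + 1) * |y - x| + c * |y - x| := by
        refine add_le_add (h.dist_betaT_iterate_succ_le hβ0 hyI hxI) ?_
        rw [dist_comm]
        exact hg.dist_le_mul y (hsub hyI) x (hsub hxI)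
    _ = (β ^ (q + 1) + c) * |y - x| := (add_mul _ _ _).symm
    _ ≤ (β ^ (q + 1) + c) * r := by gcongr

theorem exists_intervalUbiquitous_targetSet (hβ : 1 < β) :
    ∃ K > 0, ∃ ε > 0, ∀ (n : ℕ) (g : ℝ → UnitAddCircle) (c : ℝ≥0) (r p : ℝ), n ≠ 0 →
      LipschitzOnWith c g (Ico 0 1) → c ≤ ε * β ^ n → 0 ≤ r → β ^ n * r ≤ ε → 2 * β ^ n * r < p →
        IntervalUbiquitous (targetSet β g p n) (K * n / β ^ n) r := by
  have : 0 < β := by positivity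
  obtain ⟨K, hK, hfull⟩ := exists_isFullCylinder hβ
  have hm : 0 < min (1 / 4) ((β - 1) / 4) := lt_min (by norm_num) (by linarith)
  refine ⟨K * β, by positivity, min (1 / 4) ((β - 1) / 4) / β, by positivity, ?_⟩
  rintro (_ | q) g c r p hn hg hc hr0 hr hp
  · exact absurd rfl hn
  have hε : min (1 / 4) ((β - 1) / 4) / β ≤ min (1 / 4) ((β - 1) / 4) := div_le_self hm.le hβ.le
  have hcq : c / β ^ q ≤ min (1 / 4) ((β - 1) / 2) := by
    rw [div_le_iff₀ (by positivity)]
    calc (c : ℝ) ≤ min (1 / 4) ((β - 1) / 4) / β * β ^ (q + 1) := hc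
      _ = min (1 / 4) ((β - 1) / 4) * β ^ q := by rw [pow_succ]; field_simp
      _ ≤ min (1 / 4) ((β - 1) / 2) * β ^ q := by gcongr; linarith
  have hcβ : c ≤ β ^ (q + 1) := hc.trans <|
    mul_le_of_le_one_left (by positivity) (by linarith [min_le_left (1 / 4) ((β - 1) / 4)])
  have hcell : K * (q + 1) / β ^ q = K * β * (q + 1 : ℕ) / β ^ (q + 1) := by
    push_cast
    rw [pow_succ]
    field_simp
  intro v hv hv1
  rw [← hcell] at hv1 ⊢
  obtain ⟨a, hva, hal, ha⟩ := hfull q v hv hv1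
  obtain ⟨x, hax, hxr, hx⟩ := ha.exists_Icc_subset_targetSet hβ (hv.trans hva) (hal.trans hv1) hg
    hcq hr0 (hr.trans (hε.trans (min_le_right _ _))) <|
      calc (β ^ (q + 1) + c) * r ≤ (β ^ (q + 1) + β ^ (q + 1)) * r := by gcongr
        _ = 2 * β ^ (q + 1) * r := by rw [two_mul]
        _ < p := hp
  exact ⟨x, hva.trans hax, hxr.trans hal, hx⟩

lemma pow_mul_abs_sub_le_of_mem_targetSet (hβ : 0 < β) {n : ℕ} {g : ℝ → UnitAddCircle} {c : ℝ≥0}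
    {p x y : ℝ} (hg : LipschitzOnWith c g (Ico 0 1)) (hc : 2 * c ≤ β ^ n)
    (hx : x ∈ targetSet β g p n) (hy : y ∈ targetSet β g p n)
    (hend : cylinderEnd β n x = cylinderEnd β n y)
    (hhalf : |(betaT β)^[n] x - (betaT β)^[n] y| ≤ 1 / 2) : β ^ n * |x - y| ≤ 4 * p := by
  have hT : |(betaT β)^[n] x - (betaT β)^[n] y| = β ^ n * |x - y| := by
    rw [← pow_mul_sub_cylinderEnd hβ.ne' n x, ← pow_mul_sub_cylinderEnd hβ.ne' n y, hend,
      ← mul_sub, sub_sub_sub_cancel_right, abs_mul, abs_of_pos (pow_pos hβ n)]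
  have hgxy : dist (g x) (g y) ≤ β ^ n / 2 * |x - y| :=
    (hg.dist_le_mul x hx.1 y hy.1).trans
      (mul_le_mul_of_nonneg_right (by linarith) (abs_nonneg _))
  have hgy := dist_comm ((betaT β)^[n] y : UnitAddCircle) (g y) ▸ hy.2
  have htri := dist_triangle4 ((betaT β)^[n] x : UnitAddCircle) (g x) (g y) ((betaT β)^[n] y : ℝ)
  rw [dist_unitAddCircle_coe_eq hhalf, hT] at htri
  linarith [hx.2]

lemma targetSet_subset_iUnion (hβ : 0 < β) (g : ℝ → UnitAddCircle) (p : ℝ) (n : ℕ) :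
    targetSet β g p n ⊆ ⋃ i : cylinderEnds β n × Bool, {x | x ∈ targetSet β g p n ∧
      cylinderEnd β n x = i.1 ∧ decide ((betaT β)^[n] x < 1 / 2) = i.2} := fun _ hx =>
  mem_iUnion.2 ⟨(⟨_, cylinderEnd_mem_cylinderEnds hβ hx.1 n⟩, _), hx, rfl, rfl⟩

lemma abs_sub_le_half_of_decide_eq {x y : ℝ} (hx : x ∈ Ico (0 : ℝ) 1) (hy : y ∈ Ico (0 : ℝ) 1)
    (h : decide (x < 1 / 2) = decide (y < 1 / 2)) : |x - y| ≤ 1 / 2 := by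
  rw [decide_eq_decide] at h
  rw [abs_le]
  rcases lt_or_ge x (1 / 2) with hx2 | hx2
  · have hy2 := h.1 hx2
    constructor <;> linarith [hx.1, hy.1]
  · have hy2 := not_lt.1 (h.not.1 hx2.not_gt)
    constructor <;> linarith [hx.2, hy.2]

lemma mul_exp_div_rpow (hβ : 0 < β) (s t : ℝ) :
    β * (Real.exp (-t) / β) ^ s = Real.exp (Real.log β - s * (Real.log β + t)) := by
  conv_lhs => rw [← Real.exp_log hβ]
  rw [← Real.exp_sub, ← Real.exp_mul, ← Real.exp_add]
  congr 1
  ring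

lemma exp_div_pow (β t : ℝ) (n : ℕ) :
    (Real.exp (-t) / β) ^ n = Real.exp (-t * n) / β ^ n := by
  rw [div_pow, ← Real.exp_nat_mul, mul_comm]

lemma mul_pow_rpow {κ ρ : ℝ} (hκ : 0 ≤ κ) (hρ : 0 ≤ ρ) (n : ℕ) (s : ℝ) :
    (κ * ρ ^ n) ^ s = κ ^ s * (ρ ^ s) ^ n := by
  rw [Real.mul_rpow hκ (by positivity), Real.rpow_pow_comm hρ]

lemma summable_natCard_mul_rpow (hβ : 1 < β) {ρ s : ℝ≥0} (hρ : β * ρ ^ (s : ℝ) < 1) (C : ℝ≥0) :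
    Summable fun n => Nat.card (cylinderEnds β n × Bool) * (C * ρ ^ n) ^ (s : ℝ) := by
  rw [← NNReal.summable_coe]
  push_cast
  refine Summable.of_nonneg_of_le (fun n => by positivity) (fun n => ?_)
    ((summable_geometric_of_lt_one (by positivity) hρ).mul_left
      (4 * (β / (β - 1)) * C ^ (s : ℝ)))
  have hcard : (Nat.card (cylinderEnds β n × Bool) : ℝ) ≤ 4 * (β / (β - 1)) * β ^ n := by
    have hends := (cylinderEnds_finite_and_ncard_le hβ n).2
    rw [Nat.card_prod, Nat.card_coe_set_eq, Nat.card_eq_fintype_card, Fintype.card_bool]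
    push_cast
    rw [pow_succ, mul_div_assoc] at hends
    linarith
  rw [mul_pow_rpow C.coe_nonneg ρ.coe_nonneg]
  calc Nat.card (cylinderEnds β n × Bool) * (C ^ (s : ℝ) * (ρ ^ (s : ℝ)) ^ n : ℝ)
      ≤ 4 * (β / (β - 1)) * β ^ n * (C ^ (s : ℝ) * (ρ ^ (s : ℝ)) ^ n) := by gcongr
    _ = 4 * (β / (β - 1)) * C ^ (s : ℝ) * (β * ρ ^ (s : ℝ)) ^ n := by rw [mul_pow]; ring

section Bounds

variable {g : ℕ → ℝ → UnitAddCircle} {c : ℕ → ℝ≥0} {ψ : ℕ → ℝ} {s : ℝ≥0} {t : ℝ}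

theorem dimH_limsup_targetSet_le (hβ : 1 < β) (hg : ∀ n, LipschitzOnWith (c n) (g n) (Ico 0 1))
    (hc : (fun n => (c n : ℝ)) =o[atTop] (β ^ · : ℕ → ℝ))
    (hst : Real.log β < s * (Real.log β + t)) (hψ : ∀ᶠ n : ℕ in atTop, ψ n ≤ Real.exp (-t * n)) :
    dimH (limsup (fun n => targetSet β (g n) (ψ n) n) atTop) ≤ s := by
  have hβ0 : 0 < β := by positivity
  have ht : 0 < Real.log β + t :=
    pos_of_mul_pos_right ((Real.log_pos hβ).trans hst) s.coe_nonneg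
  have hfin : ∀ n, Finite (cylinderEnds β n) := fun n =>
    (cylinderEnds_finite_and_ncard_le hβ n).1.to_subtype
  lift Real.exp (-t) / β to ℝ≥0 using by positivity with ρ hρ
  have hρ1 : ρ < 1 := by
    rw [← NNReal.coe_lt_coe, hρ, NNReal.coe_one, div_lt_one hβ0]
    exact (Real.exp_lt_exp.2 (by linarith)).trans_eq (Real.exp_log hβ0)
  refine dimH_limsup_le_of_cover (d := fun n => 4 * ρ ^ n)
    (Eventually.of_forall fun n => targetSet_subset_iUnion hβ0 (g n) (ψ n) n) ?_ ?_ ?_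
  · filter_upwards [hψ, hc.bound one_half_pos] with n hψn hcn i
    rw [Real.norm_of_nonneg (c n).coe_nonneg, Real.norm_of_nonneg (by positivity)] at hcn
    refine Metric.ediam_le fun x hx y hy => ?_
    have hxy := pow_mul_abs_sub_le_of_mem_targetSet hβ0 (hg n) (by linarith) hx.1 hy.1
      (hx.2.1.trans hy.2.1.symm) (abs_sub_le_half_of_decide_eq (betaT_iterate_mem_Ico hx.1.1 n)
        (betaT_iterate_mem_Ico hy.1.1 n) (hx.2.2.trans hy.2.2.symm))
    rw [edist_le_coe, ← NNReal.coe_le_coe, coe_nndist, Real.dist_eq]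
    push_cast
    rw [hρ, exp_div_pow, ← mul_div_assoc, le_div_iff₀' (by positivity)]
    linarith
  · simpa using (NNReal.tendsto_pow_atTop_nhds_zero_of_lt_one hρ1).const_mul 4
  · exact summable_natCard_mul_rpow hβ
      (by rw [hρ, mul_exp_div_rpow hβ0, Real.exp_lt_one_iff]; linarith) 4

lemma eventually_mul_div_pow_le (hβ : 0 < β) {σ B : ℝ} (hσ : 1 < β * σ) (hB : 0 < B) (K : ℝ) :
    ∀ᶠ n : ℕ in atTop, K * n / β ^ n ≤ B * σ ^ n := by
  have hσ0 : 0 < σ := pos_of_mul_pos_right (one_pos.trans hσ) hβ.le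
  have hlim := (tendsto_self_mul_const_pow_of_lt_one (by positivity)
    (inv_lt_one_of_one_lt₀ hσ)).const_mul K
  rw [mul_zero] at hlim
  filter_upwards [hlim.eventually_le_const hB] with n hn
  rw [div_le_iff₀ (by positivity), mul_assoc, ← mul_pow, mul_comm σ]
  rwa [inv_pow, ← div_eq_mul_inv, ← mul_div_assoc, div_le_iff₀ (by positivity)] at hn

theorem le_dimH_limsup_targetSet (hβ : 1 < β) (hg : ∀ n, LipschitzOnWith (c n) (g n) (Ico 0 1))
    (hc : (fun n => (c n : ℝ)) =o[atTop] (β ^ · : ℕ → ℝ)) (ht : 0 ≤ t)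
    (hst : s * (Real.log β + t) < Real.log β) (hψ : ∃ᶠ n : ℕ in atTop, Real.exp (-t * n) < ψ n) :
    s ≤ dimH (limsup (fun n => targetSet β (g n) (ψ n) n) atTop) := by
  have hβ0 : 0 < β := by positivity
  have hs1 : s ≤ 1 := by
    have : s * Real.log β < Real.log β :=
      (mul_le_mul_of_nonneg_left (by linarith) s.coe_nonneg).trans_lt hst
    exact_mod_cast ((mul_lt_iff_lt_one_left (Real.log_pos hβ)).1 this).le
  obtain ⟨K, hK, ε, hε, hubiq⟩ := exists_intervalUbiquitous_targetSet hβ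
  refine le_dimH_limsup_of_intervalUbiquitous hs1 fun δ hδ => ?_
  set ρ : ℝ := Real.exp (-t) / β
  have hρ0 : 0 < ρ := by positivity
  set κ : ℝ := min ε (1 / 2)
  have hκ0 : 0 < κ := by positivity
  have hlen := eventually_mul_div_pow_le hβ0 (σ := ρ ^ (s : ℝ)) (B := δ * κ ^ (s : ℝ))
    (by rw [mul_exp_div_rpow hβ0, Real.one_lt_exp_iff]; linarith) (by positivity) K
  refine (hψ.and_eventually (hlen.and ((hc.bound hε).and (eventually_ne_atTop 0)))).mono ?_
  rintro n ⟨hψn, hLn, hcn, hn⟩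
  rw [Real.norm_of_nonneg (c n).coe_nonneg, Real.norm_of_nonneg (by positivity)] at hcn
  have hr : β ^ n * (κ * ρ ^ n) = κ * Real.exp (-t * n) := by
    rw [exp_div_pow, mul_left_comm, mul_div_cancel₀ _ (by positivity)]
  have hrκ : β ^ n * (κ * ρ ^ n) ≤ κ := by
    rw [hr]
    refine mul_le_of_le_one_right hκ0.le (Real.exp_le_one_iff.2 ?_)
    exact mul_nonpos_of_nonpos_of_nonneg (neg_nonpos.2 ht) n.cast_nonneg
  have : (0 : ℝ) < n := by positivity
  refine ⟨K * n / β ^ n, κ * ρ ^ n, by positivity, by positivity, ?_, ?_,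
    hubiq n _ _ _ _ hn (hg n) hcn (by positivity) (hrκ.trans (min_le_left _ _)) ?_⟩
  · have : κ * ρ ^ n ≤ β ^ n * (κ * ρ ^ n) :=
      le_mul_of_one_le_left (by positivity) (one_le_pow₀ hβ.le)
    linarith [min_le_right ε (1 / 2)]
  · rwa [mul_pow_rpow hκ0.le hρ0.le, ← mul_assoc]
  · calc 2 * β ^ n * (κ * ρ ^ n) = 2 * κ * Real.exp (-t * n) := by rw [mul_assoc, hr, mul_assoc]
      _ ≤ Real.exp (-t * n) := mul_le_of_le_one_left (by positivity)
          (by linarith [min_le_right ε (1 / 2)])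
      _ < ψ n := hψn

lemma eventually_le_exp_of_lt_liminf (hψ : ∀ n, 0 < ψ n) {t : ℝ≥0}
    (h : t < liminf (fun n : ℕ => ENNReal.ofReal (-Real.log (ψ n) / n)) atTop) :
    ∀ᶠ n : ℕ in atTop, ψ n ≤ Real.exp (-t * n) := by
  filter_upwards [eventually_lt_of_lt_liminf h, eventually_gt_atTop 0] with n hn hn0
  rw [ENNReal.lt_ofReal_iff_toReal_lt ENNReal.coe_ne_top, ENNReal.coe_toReal,
    lt_div_iff₀ (by positivity)] at hn
  rw [← Real.log_le_iff_le_exp (hψ n)]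
  linarith

lemma frequently_exp_lt_of_liminf_lt (hψ : ∀ n, 0 < ψ n) {t : ℝ≥0}
    (h : liminf (fun n : ℕ => ENNReal.ofReal (-Real.log (ψ n) / n)) atTop < t) :
    ∃ᶠ n : ℕ in atTop, Real.exp (-t * n) < ψ n := by
  refine ((frequently_lt_of_liminf_lt (by isBoundedDefault) h).and_eventually
    (eventually_gt_atTop 0)).mono ?_
  rintro n ⟨hn, hn0⟩
  rw [← ENNReal.ofReal_coe_nnreal] at hn
  have hlt := (ENNReal.ofReal_lt_ofReal_iff'.1 hn).1
  rw [div_lt_iff₀ (by positivity)] at hlt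
  rw [← Real.lt_log_iff_exp_lt (hψ n)]
  linarith

lemma continuous_div_const_add {a : ℝ≥0∞} (ha : a ≠ ⊤) :
    Continuous fun t => a / (a + t) :=
  continuous_iff_continuousAt.2 fun _ =>
    ENNReal.Tendsto.const_div (tendsto_id.const_add a) (Or.inr ha)

lemma ofReal_div_ofReal_add_coe {a : ℝ} (ha : 0 < a) (t : ℝ≥0) :
    ENNReal.ofReal a / (ENNReal.ofReal a + t) = ENNReal.ofReal (a / (a + t)) := by
  rw [ENNReal.ofReal_div_of_pos (by positivity), ENNReal.ofReal_add ha.le t.coe_nonneg,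
    ENNReal.ofReal_coe_nnreal]

lemma dimH_limsup_targetSet_le_div (hβ : 1 < β)
    (hg : ∀ n, LipschitzOnWith (c n) (g n) (Ico 0 1))
    (hc : (fun n => (c n : ℝ)) =o[atTop] (β ^ · : ℕ → ℝ)) (hψ : ∀ n, 0 < ψ n) {τ : ℝ≥0∞}
    (hτ : τ ≤ liminf (fun n : ℕ => ENNReal.ofReal (-Real.log (ψ n) / n)) atTop) :
    dimH (limsup (fun n => targetSet β (g n) (ψ n) n) atTop) ≤
      ENNReal.ofReal (Real.log β) / (ENNReal.ofReal (Real.log β) + τ) := by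
  have hlog := Real.log_pos hβ
  rcases eq_or_ne τ 0 with rfl | hτ0
  · rw [add_zero, ENNReal.div_self (by simpa using hlog) ENNReal.ofReal_ne_top, ← Real.dimH_univ]
    exact dimH_mono (subset_univ _)
  by_contra! hlt
  obtain ⟨s, hs, hsd⟩ := ENNReal.lt_iff_exists_nnreal_btwn.1 hlt
  have := nhdsLT_neBot_of_exists_lt ⟨0, pos_iff_ne_zero.2 hτ0⟩
  have hnear : ∀ᶠ t in 𝓝[<] τ,
      ENNReal.ofReal (Real.log β) / (ENNReal.ofReal (Real.log β) + t) < s :=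
    Eventually.filter_mono nhdsWithin_le_nhds <|
      ((continuous_div_const_add ENNReal.ofReal_ne_top).tendsto τ).eventually_lt_const hs
  obtain ⟨t, hts, htτ⟩ := (hnear.and eventually_mem_nhdsWithin).exists
  lift t to ℝ≥0 using htτ.ne_top
  rw [ofReal_div_ofReal_add_coe hlog, ENNReal.ofReal_lt_coe_iff (by positivity),
    div_lt_iff₀ (by positivity)] at hts
  exact hsd.not_ge
    (dimH_limsup_targetSet_le hβ hg hc hts (eventually_le_exp_of_lt_liminf hψ (htτ.trans_le hτ)))

lemma div_le_dimH_limsup_targetSet (hβ : 1 < β)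
    (hg : ∀ n, LipschitzOnWith (c n) (g n) (Ico 0 1))
    (hc : (fun n => (c n : ℝ)) =o[atTop] (β ^ · : ℕ → ℝ)) (hψ : ∀ n, 0 < ψ n) {τ : ℝ≥0∞}
    (hτ : liminf (fun n : ℕ => ENNReal.ofReal (-Real.log (ψ n) / n)) atTop ≤ τ) :
    ENNReal.ofReal (Real.log β) / (ENNReal.ofReal (Real.log β) + τ) ≤
      dimH (limsup (fun n => targetSet β (g n) (ψ n) n) atTop) := by
  have hlog := Real.log_pos hβ
  refine ENNReal.le_of_forall_nnreal_lt fun s hs => ?_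
  have hτtop : τ ≠ ⊤ := by rintro rfl; simp at hs
  have := nhdsGT_neBot_of_exists_gt ⟨⊤, hτtop.lt_top⟩
  have hnear : ∀ᶠ t in 𝓝[>] τ,
      s < ENNReal.ofReal (Real.log β) / (ENNReal.ofReal (Real.log β) + t) :=
    Eventually.filter_mono nhdsWithin_le_nhds <|
      ((continuous_div_const_add ENNReal.ofReal_ne_top).tendsto τ).eventually_const_lt hs
  obtain ⟨t, hst, hτt⟩ := (hnear.and eventually_mem_nhdsWithin).exists
  have httop : t ≠ ⊤ := by rintro rfl; simp at hst
  lift t to ℝ≥0 using httop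
  rw [ofReal_div_ofReal_add_coe hlog, ENNReal.lt_ofReal_iff_toReal_lt ENNReal.coe_ne_top,
    ENNReal.coe_toReal, lt_div_iff₀ (by positivity)] at hst
  exact le_dimH_limsup_targetSet hβ hg hc t.coe_nonneg hst
    (frequently_exp_lt_of_liminf_lt hψ (hτ.trans_lt hτt))

end Bounds

end TargetSets

theorem dimH_modified_shrinking_target_dim_one_general {β : ℝ} (hβ : 1 < β)
    {f : ℕ → ℝ → UnitAddCircle} {c : ℕ → ℝ≥0}
    (hf : ∀ n, LipschitzOnWith (c n) (f n) (Ico 0 1))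
    (hc : (fun n => (c n : ℝ)) =o[atTop] (β ^ · : ℕ → ℝ))
    {ψ : ℕ → ℝ} (hψ : ∀ n, ψ n ∈ Ioc (0 : ℝ) 1) :
    dimH {x : ℝ | x ∈ Ico (0 : ℝ) 1 ∧
        ∃ᶠ n in atTop, dist ((betaT β)^[n] x : UnitAddCircle) (f n x) < ψ n} =
      ENNReal.ofReal (Real.log β) / (ENNReal.ofReal (Real.log β) +
        liminf (fun n : ℕ => ENNReal.ofReal (-Real.log (ψ n) / n)) atTop) := by
  have hlimsup : {x : ℝ | x ∈ Ico (0 : ℝ) 1 ∧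
      ∃ᶠ n in atTop, dist ((betaT β)^[n] x : UnitAddCircle) (f n x) < ψ n} =
        limsup (fun n => targetSet β (f n) (ψ n) n) atTop := by
    ext x
    simp only [targetSet, mem_limsup_iff_frequently_mem, mem_ofPred_eq, frequently_and_distrib_left]
  rw [hlimsup]
  exact le_antisymm (dimH_limsup_targetSet_le_div hβ hf hc (fun n => (hψ n).1) le_rfl)
    (div_le_dimH_limsup_targetSet hβ hf hc (fun n => (hψ n).1) le_rfl)

/-- **One-dimensional modified shrinking target.** For `β > 1`, a uniformly Lipschitz
sequence of maps `f_n : 𝕋 → 𝕋` and `ψ : ℕ → (0,1]`, the Hausdorff dimension of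
`{x ∈ 𝕋 : |T_β^n(x) - f_n(x)| < ψ(n) for infinitely many n}` equals
`log β / (log β + τ)` with `τ = liminf (-log ψ(n))/n` (the value being `0` when
`τ = ∞`, as encoded by `ℝ≥0∞` arithmetic). -/
theorem dimH_modified_shrinking_target_dim_one
    (β : ℝ) (hβ : 1 < β) (c : ℝ) (hc : 0 < c) (f : ℕ → ℝ → ℝ)
    (hf : ∀ n : ℕ, ∀ x ∈ Set.Ico (0 : ℝ) 1, ∀ y ∈ Set.Ico (0 : ℝ) 1,
      tdist (f n x) (f n y) ≤ c * tdist x y)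
    (ψ : ℕ → ℝ) (hψ : ∀ n, ψ n ∈ Set.Ioc (0 : ℝ) 1) :
    dimH {x : ℝ | x ∈ Set.Ico (0 : ℝ) 1 ∧
        (∃ᶠ n in atTop, tdist ((betaT β)^[n] x) (f n x) < ψ n)} =
      ENNReal.ofReal (Real.log β) /
        (ENNReal.ofReal (Real.log β) +
          Filter.liminf (fun n : ℕ => ENNReal.ofReal (-Real.log (ψ n) / n)) atTop) := by
  lift c to ℝ≥0 using hc.le
  have hlip : ∀ n, LipschitzOnWith c (fun x => (f n x : UnitAddCircle)) (Ico 0 1) := fun n =>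
    LipschitzOnWith.of_dist_le_mul fun x hx y hy => by
      rw [← tdist_eq_dist]
      refine (hf n x hx y hy).trans (mul_le_mul_of_nonneg_left ?_ c.coe_nonneg)
      exact (tdist_eq_dist x y).trans_le (dist_unitAddCircle_coe_le x y)
  have hconst : (fun _ : ℕ => (c : ℝ)) =o[atTop] (β ^ · : ℕ → ℝ) :=
    Asymptotics.isLittleO_const_left.2 <|
      Or.inr (tendsto_abs_atTop_atTop.comp (tendsto_pow_atTop_atTop_of_one_lt hβ))
  simpa only [tdist_eq_dist] using
    dimH_modified_shrinking_target_dim_one_general hβ hlip hconst hψ
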